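/- arXiv:math/0610310 — 2 statements merged into one kernel-verified Lean document; each statement's English description precedes it below -/
import Mathlib

section
/- Let G be a group and μ ∈ G such that G is generated by the commutator subgroup [G,G] together with μ. Let ρ : G → SL(2,ℂ) be a representation such that every element of ρ([G,G]) has the form ±[[1, ω],[0, 1]] with ω ∈ ℂ. Then ρ is reducible: there exists a one-dimensional subspace of ℂ² invariant under ρ(g) for every g ∈ G. -/
/-!
If some `g ∈ [G,G]` has `ρ g = ±[[1, ω], [0, 1]]` with `ω ≠ 0`, then the only eigenline of `ρ g`
is spanned by `e₁`. Every conjugate of `g` is again in `[G,G]`, hence maps to an upper triangular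
matrix with equal diagonal entries, and comparing the bottom rows of
`ρ (x g x⁻¹) ρ x = ρ x ρ g` shows that `ρ x` is upper triangular for every `x`, so `e₁` spans an
invariant line. Otherwise `ρ` is scalar on `[G,G]`, and any eigenvector of `ρ μ` is a common
eigenvector of a generating set, hence of all of `ρ(G)`.
-/

theorem exists_eigenvector (M : Matrix (Fin 2) (Fin 2) ℂ) :
    ∃ v : Fin 2 → ℂ, v ≠ 0 ∧ ∃ c : ℂ, M.mulVec v = c • v := by
  obtain ⟨c, hc⟩ := Module.End.exists_eigenvalue (Matrix.toLin' M)
  obtain ⟨v, hv⟩ := hc.exists_hasEigenvector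
  exact ⟨v, hv.2, c, by simpa using hv.apply_eq_smul⟩

/-- The elements of `G` having `v` as an eigenvector form a subgroup, so it is enough to check
generators. -/
theorem eigenvector_of_closure {G : Type*} [Group G] (S : Set G)
    (hS : Subgroup.closure S = ⊤) (ρ : G →* Matrix.SpecialLinearGroup (Fin 2) ℂ)
    (v : Fin 2 → ℂ) (hv : v ≠ 0)
    (h : ∀ g ∈ S, ∃ c : ℂ, (ρ g : Matrix (Fin 2) (Fin 2) ℂ).mulVec v = c • v) (g : G) :
    ∃ c : ℂ, (ρ g : Matrix (Fin 2) (Fin 2) ℂ).mulVec v = c • v := by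
  have hg : g ∈ Subgroup.closure S := hS ▸ Subgroup.mem_top g
  induction hg using Subgroup.closure_induction with
  | mem x hx => exact h x hx
  | one => exact ⟨1, by simp⟩
  | mul x y _ _ hx hy =>
    obtain ⟨a, ha⟩ := hx
    obtain ⟨b, hb⟩ := hy
    refine ⟨b * a, ?_⟩
    rw [map_mul, Matrix.SpecialLinearGroup.coe_mul, ← Matrix.mulVec_mulVec, hb,
      Matrix.mulVec_smul, ha, smul_smul]
  | inv x _ hx =>
    obtain ⟨a, ha⟩ := hx
    have key : v = a • (ρ x⁻¹ : Matrix (Fin 2) (Fin 2) ℂ).mulVec v := by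
      rw [← Matrix.mulVec_smul, ← ha, Matrix.mulVec_mulVec,
        ← Matrix.SpecialLinearGroup.coe_mul, ← map_mul]
      simp
    have ha0 : a ≠ 0 := by
      rintro rfl
      exact hv (by simpa using key)
    refine ⟨a⁻¹, ?_⟩
    conv_rhs => rw [key]
    rw [smul_smul, inv_mul_cancel₀ ha0, one_smul]

/-- If `G` is generated by `[G,G]` together with `μ` and
`ρ : G → SL(2,ℂ)` sends every element of `[G,G]` into `±Para`, then `ρ` is
reducible: some line of `ℂ²` is invariant under all of `ρ(G)`. -/
theorem parabolic_metabelian_rep_is_reducible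
    {G : Type*} [Group G] (μ : G)
    (hgen : Subgroup.closure ((commutator G : Set G) ∪ {μ}) = ⊤)
    (ρ : G →* Matrix.SpecialLinearGroup (Fin 2) ℂ)
    (hpara : ∀ g ∈ commutator G, ∃ ω : ℂ,
      (ρ g : Matrix (Fin 2) (Fin 2) ℂ) = !![1, ω; 0, 1] ∨
      (ρ g : Matrix (Fin 2) (Fin 2) ℂ) = !![-1, ω; 0, -1]) :
    ∃ v : Fin 2 → ℂ, v ≠ 0 ∧
      ∀ g : G, ∃ c : ℂ, (ρ g : Matrix (Fin 2) (Fin 2) ℂ).mulVec v = c • v := by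
  have hp : ∀ g ∈ commutator G, ∃ s ω : ℂ,
      (ρ g : Matrix (Fin 2) (Fin 2) ℂ) = !![s, ω; 0, s] := by
    intro g hg
    obtain ⟨ω, h | h⟩ := hpara g hg
    · exact ⟨1, ω, h⟩
    · exact ⟨-1, ω, h⟩
  by_cases hscal : ∀ g ∈ commutator G, (ρ g : Matrix (Fin 2) (Fin 2) ℂ) 0 1 = 0
  · obtain ⟨v, hv, c, hc⟩ := exists_eigenvector (ρ μ : Matrix (Fin 2) (Fin 2) ℂ)
    refine ⟨v, hv, eigenvector_of_closure _ hgen ρ v hv ?_⟩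
    rintro g (hg | rfl)
    · obtain ⟨s, ω, h⟩ := hp g hg
      have hω : ω = 0 := by simpa [h] using hscal g hg
      refine ⟨s, ?_⟩
      rw [h, hω]
      ext i
      fin_cases i <;> simp [Matrix.mulVec, dotProduct, Fin.sum_univ_two]
    · exact ⟨c, hc⟩
  · push Not at hscal
    obtain ⟨g, hg, hne⟩ := hscal
    obtain ⟨s, ω, h⟩ := hp g hg
    have hω : ω ≠ 0 := by simpa [h] using hne
    refine ⟨![1, 0], by simp, fun x => ⟨(ρ x : Matrix (Fin 2) (Fin 2) ℂ) 0 0, ?_⟩⟩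
    obtain ⟨s', ω', h'⟩ := hp (x * g * x⁻¹)
      ((inferInstance : (commutator G).Normal).conj_mem g hg x)
    have hconj : (ρ (x * g * x⁻¹) : Matrix (Fin 2) (Fin 2) ℂ) * ρ x = ρ x * ρ g := by
      rw [← Matrix.SpecialLinearGroup.coe_mul, ← Matrix.SpecialLinearGroup.coe_mul,
        ← map_mul, ← map_mul]
      simp
    rw [h, h'] at hconj
    have e0 := congrFun (congrFun hconj 1) 0
    have e1 := congrFun (congrFun hconj 1) 1
    simp [Matrix.mul_apply, Fin.sum_univ_two] at e0 e1
    have hc : (ρ x : Matrix (Fin 2) (Fin 2) ℂ) 1 0 = 0 := by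
      by_contra hc
      have hs : s' = s := mul_right_cancel₀ hc (by grind)
      rw [hs] at e1
      exact mul_ne_zero hc hω (by linear_combination -e1)
    ext i
    fin_cases i <;> simp [Matrix.mulVec, dotProduct, Fin.sum_univ_two, hc]
end

section
/- Let n ≥ 1 and let W be an n×n integer matrix whose determinant is odd (hence nonzero), and let S = { λ : Fin n → ℂ | λⱼ ≠ 0 for all j and ∏ⱼ λⱼ^{W(i,j)} = 1 for every i }. Then: (a) the only λ ∈ S with λⱼ = λⱼ⁻¹ for all j is the constant tuple λ = 1; and (b) the quotient of S \ {1} by the equivalence relation identifying λ with the tuple (λⱼ⁻¹)ⱼ has exactly (|det(W)| − 1)/2 elements. -/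
/-!
Solutions `l` are the complex characters of `ℤⁿ` that are trivial on the row lattice `N = Wᵀ ℤⁿ`,
i.e. the characters of the finite group `ℤⁿ ⧸ N`, which has order `|det W|`; by duality of finite
abelian groups there are `|det W|` of them (`card_metabelianSolutionSet`).

Triviality on `N` applied to `Wᵀ (adj Wᵀ) eₖ = det W • eₖ` gives `lₖ ^ det W = 1`. Since `det W` is
odd, a self-inverse solution, whose entries are `±1`, is trivial. Hence inversion acts freely on the
nontrivial solutions, and its orbits, all of size two, number `(|det W| - 1) / 2`.
-/

/-- The solution set of the equations `∏ⱼ λⱼ^{W i j} = 1` in nonzero complex tuples. -/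
def metabelianSolutionSet (n : ℕ) (W : Matrix (Fin n) (Fin n) ℤ) : Set (Fin n → ℂ) :=
  {l : Fin n → ℂ | (∀ j, l j ≠ 0) ∧ ∀ i, ∏ j, l j ^ W i j = 1}

/-- The equivalence relation on a set of tuples identifying a tuple `λ` with the
componentwise inverse tuple `(λⱼ⁻¹)ⱼ`. -/
def invPairSetoid (n : ℕ) (T : Set (Fin n → ℂ)) : Setoid T where
  r a b := a.1 = b.1 ∨ a.1 = fun j => (b.1 j)⁻¹
  iseqv := by
    constructor
    · intro a; left; rfl
    · intro a b h
      rcases h with h | h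
      · left; exact h.symm
      · right; funext j; rw [h]; simp
    · intro a b c hab hbc
      rcases hab with h | h <;> rcases hbc with h' | h'
      · left; exact h.trans h'
      · right; rw [h, h']
      · right; rw [h]; funext j; rw [h']
      · left; rw [h]; funext j; rw [h']; simp

open Matrix

lemma prod_zpow_transpose_mulVec {n : ℕ} {W : Matrix (Fin n) (Fin n) ℤ} {l : Fin n → ℂ}
    (hl : l ∈ metabelianSolutionSet n W) (x : Fin n → ℤ) :
    ∏ j, l j ^ (Wᵀ *ᵥ x) j = 1 := by
  obtain ⟨h0, h1⟩ := hl
  have zpow_sum : ∀ (a : ℂ), a ≠ 0 → ∀ f : Fin n → ℤ, a ^ (∑ i, f i) = ∏ i, a ^ f i := by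
    intro a ha f
    lift a to ℂˣ using ha.isUnit
    have h := map_sum (zmultiplesHom (Additive ℂˣ) (Additive.ofMul a)) f Finset.univ
    have h' : a ^ (∑ i, f i) = ∏ i, a ^ f i := h
    exact_mod_cast congrArg Units.val h'
  calc ∏ j, l j ^ (Wᵀ *ᵥ x) j = ∏ j, ∏ i, (l j ^ W i j) ^ x i := by
        refine Finset.prod_congr rfl fun j _ => ?_
        rw [Matrix.mulVec, dotProduct, zpow_sum _ (h0 j)]
        exact Finset.prod_congr rfl fun i _ => zpow_mul _ _ _
    _ = ∏ i, (∏ j, l j ^ W i j) ^ x i := by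
        rw [Finset.prod_comm]
        exact Finset.prod_congr rfl fun i _ => Finset.prod_zpow _ _ _
    _ = 1 := by simp [h1]

lemma zpow_det_eq_one {n : ℕ} {W : Matrix (Fin n) (Fin n) ℤ} {l : Fin n → ℂ}
    (hl : l ∈ metabelianSolutionSet n W) (k : Fin n) : l k ^ W.det = 1 := by
  have h := prod_zpow_transpose_mulVec hl (Wᵀ.adjugate *ᵥ Pi.single k 1)
  rw [mulVec_mulVec, mul_adjugate, det_transpose, smul_mulVec, one_mulVec,
    Finset.prod_eq_single k] at h
  · simpa using h
  · intro j _ hj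
    simp [hj]
  · simp

lemma eq_one_of_self_inverse {n : ℕ} {W : Matrix (Fin n) (Fin n) ℤ} (hodd : Odd W.det)
    {l : Fin n → ℂ} (hl : l ∈ metabelianSolutionSet n W) (h : ∀ j, l j = (l j)⁻¹) :
    l = fun _ => (1 : ℂ) := by
  funext k
  have hsq : l k * l k = 1 := by
    nth_rewrite 2 [h k]
    exact mul_inv_cancel₀ (hl.1 k)
  rcases mul_self_eq_one_iff.mp hsq with h1 | h1
  · exact h1
  · have hd := zpow_det_eq_one hl k
    rw [h1, hodd.neg_one_zpow] at hd
    norm_num at hd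

/-- The lattice in `ℤⁿ` spanned by the rows of `W`, as the range of `Wᵀ`. -/
def rowLattice {n : ℕ} (W : Matrix (Fin n) (Fin n) ℤ) : Submodule ℤ (Fin n → ℤ) :=
  LinearMap.range (Matrix.toLin' Wᵀ)

lemma card_quotient_rowLattice {n : ℕ} (W : Matrix (Fin n) (Fin n) ℤ) (h : W.det ≠ 0) :
    Nat.card ((Fin n → ℤ) ⧸ rowLattice W) = W.det.natAbs := by
  have hinj : Function.Injective (Matrix.toLin' Wᵀ) := by
    rw [← LinearMap.ker_eq_bot]
    by_contra hk
    refine h ?_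
    rw [← det_transpose, ← LinearMap.det_toLin']
    exact LinearMap.det_eq_zero_iff_ker_ne_bot.mpr hk
  rw [← Submodule.natAbs_det_equiv (rowLattice W) (LinearEquiv.ofInjective _ hinj),
    ← det_transpose W, ← LinearMap.det_toLin']
  congr 2

lemma addChar_mk_eq_prod {n : ℕ} {W : Matrix (Fin n) (Fin n) ℤ}
    (ψ : AddChar ((Fin n → ℤ) ⧸ rowLattice W) ℂ) (v : Fin n → ℤ) :
    ψ ((rowLattice W).mkQ v) = ∏ j, ψ ((rowLattice W).mkQ (Pi.single j 1)) ^ v j := by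
  have hsum : ∀ g : Fin n → (Fin n → ℤ) ⧸ rowLattice W, ψ (∑ j, g j) = ∏ j, ψ (g j) := fun g =>
    map_prod ψ.toMonoidHom (fun j => Multiplicative.ofAdd (g j)) Finset.univ
  conv_lhs => rw [pi_eq_sum_univ' v, map_sum, hsum]
  refine Finset.prod_congr rfl fun j _ => ?_
  rw [map_smul, AddChar.map_zsmul_eq_zpow]

/-- Duality between `ℤⁿ ⧸ rowLattice W` and the solution set: a character corresponds to the tuple
of its values on the standard basis. -/
noncomputable def addCharEquiv {n : ℕ} (W : Matrix (Fin n) (Fin n) ℤ) :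
    AddChar ((Fin n → ℤ) ⧸ rowLattice W) ℂ ≃ metabelianSolutionSet n W := by
  refine Equiv.ofBijective
    (fun ψ => ⟨fun j => ψ ((rowLattice W).mkQ (Pi.single j 1)), ?_, ?_⟩) ⟨?_, ?_⟩
  · intro j
    exact (ψ.val_isUnit _).ne_zero
  · intro i
    rw [← addChar_mk_eq_prod ψ (W i)]
    have : (rowLattice W).mkQ (W i) = 0 := by
      rw [Submodule.mkQ_apply, Submodule.Quotient.mk_eq_zero]
      exact ⟨Pi.single i 1, by ext j; simp⟩
    rw [this, AddChar.map_zero_eq_one]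
  · intro ψ φ h
    ext q
    obtain ⟨v, rfl⟩ := (rowLattice W).mkQ_surjective q
    rw [addChar_mk_eq_prod, addChar_mk_eq_prod]
    exact Finset.prod_congr rfl fun j _ =>
      congrArg (· ^ v j) (congrFun (congrArg Subtype.val h) j)
  · rintro ⟨l, hl⟩
    have hmul : ∀ v w : Fin n → ℤ,
        ∏ j, l j ^ (v + w) j = (∏ j, l j ^ v j) * ∏ j, l j ^ w j := by
      intro v w
      rw [← Finset.prod_mul_distrib]
      exact Finset.prod_congr rfl fun j _ => zpow_add₀ (hl.1 j) _ _
    let f : (Fin n → ℤ) ⧸ rowLattice W → ℂ :=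
      Quotient.lift (fun v : Fin n → ℤ => ∏ j, l j ^ v j) (by
        intro v w hvw
        obtain ⟨x, hx⟩ := (Submodule.quotientRel_def _).mp hvw
        have hv : v = Wᵀ *ᵥ x + w := by
          rw [← Matrix.toLin'_apply, hx]
          simp
        change ∏ j, l j ^ v j = ∏ j, l j ^ w j
        rw [hv, hmul, prod_zpow_transpose_mulVec hl, one_mul])
    refine ⟨⟨f, ?_, ?_⟩, ?_⟩
    · change ∏ j, l j ^ (0 : Fin n → ℤ) j = 1
      simp
    · intro a b
      obtain ⟨v, rfl⟩ := (rowLattice W).mkQ_surjective a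
      obtain ⟨w, rfl⟩ := (rowLattice W).mkQ_surjective b
      exact hmul v w
    · ext k
      change ∏ j, l j ^ (Pi.single k 1 : Fin n → ℤ) j = l k
      rw [Finset.prod_eq_single k]
      · simp
      · intro j _ hj
        simp [hj]
      · simp

lemma card_metabelianSolutionSet {n : ℕ} (W : Matrix (Fin n) (Fin n) ℤ) (h : W.det ≠ 0) :
    Nat.card (metabelianSolutionSet n W) = W.det.natAbs := by
  have hc := card_quotient_rowLattice W h
  have : Finite ((Fin n → ℤ) ⧸ rowLattice W) :=
    Nat.finite_of_card_ne_zero (by rw [hc]; exact Int.natAbs_ne_zero.mpr h)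
  have := Fintype.ofFinite ((Fin n → ℤ) ⧸ rowLattice W)
  rw [← Nat.card_congr (addCharEquiv W), ← hc, Nat.card_eq_fintype_card,
    Nat.card_eq_fintype_card, AddChar.card_eq]

/-- If inversion preserves `T` and has no fixed point there, every class of `invPairSetoid`
has exactly two elements. -/
lemma card_eq_two_mul_card_quotient {n : ℕ} (T : Set (Fin n → ℂ)) (hfin : T.Finite)
    (hinv : ∀ l ∈ T, (fun j => (l j)⁻¹) ∈ T) (hfree : ∀ l ∈ T, l ≠ fun j => (l j)⁻¹) :
    Nat.card T = 2 * Nat.card (Quotient (invPairSetoid n T)) := by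
  have : Finite T := hfin
  have := Fintype.ofFinite (Quotient (invPairSetoid n T))
  rw [← Nat.card_congr (Equiv.sigmaFiberEquiv (Quotient.mk (invPairSetoid n T))), Nat.card_sigma]
  have hfib : ∀ q, Nat.card {a // Quotient.mk (invPairSetoid n T) a = q} = 2 := by
    intro q
    induction q using Quotient.inductionOn with
    | h b =>
      let b' : T := ⟨_, hinv b.1 b.2⟩
      have hset : {a | Quotient.mk (invPairSetoid n T) a = Quotient.mk _ b} = {b, b'} := by
        ext a
        rw [Set.mem_ofPred_eq, Quotient.eq]
        exact or_congr Subtype.ext_iff.symm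
          (Subtype.ext_iff (a1 := a) (a2 := b')).symm
      have hne : b ≠ b' := fun hb => hfree b.1 b.2 (congrArg Subtype.val hb)
      have h2 := Set.ncard_pair hne
      rw [← hset] at h2
      exact h2
  simp [hfib, mul_comm]

/-- For an `n×n` integer matrix with odd determinant, (a) the only
self-inverse solution of `∏ⱼ λⱼ^{W i j} = 1` is the constant tuple `1`; (b) the
quotient of the set of nontrivial solutions by `λ ∼ λ⁻¹` has `(|det W| − 1)/2`
elements. -/
theorem card_metabelian_characters
    (n : ℕ) (hn : 1 ≤ n) (W : Matrix (Fin n) (Fin n) ℤ) (hodd : Odd W.det) :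
    (∀ l ∈ metabelianSolutionSet n W,
      (∀ j, l j = (l j)⁻¹) → l = fun _ => (1 : ℂ)) ∧
    Nat.card
      (Quotient (invPairSetoid n
        (metabelianSolutionSet n W \ {fun _ => (1 : ℂ)}))) =
      (W.det.natAbs - 1) / 2 := by
  refine ⟨fun l hl h => eq_one_of_self_inverse hodd hl h, ?_⟩
  have hdet : W.det ≠ 0 := by
    intro h
    simp [h] at hodd
  have hcard := card_metabelianSolutionSet W hdet
  have hfin : (metabelianSolutionSet n W).Finite :=
    Set.finite_coe_iff.mp
      (Nat.finite_of_card_ne_zero (by rw [hcard]; exact Int.natAbs_ne_zero.mpr hdet))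
  have hone : (fun _ => (1 : ℂ)) ∈ metabelianSolutionSet n W := ⟨by simp, by simp⟩
  have hT : Nat.card ↥(metabelianSolutionSet n W \ {fun _ => (1 : ℂ)}) = W.det.natAbs - 1 := by
    rw [← hcard, Nat.card_coe_set_eq, Nat.card_coe_set_eq,
      Set.ncard_sdiff_singleton_of_mem hone]
  have htwo := card_eq_two_mul_card_quotient
    (metabelianSolutionSet n W \ {fun _ => (1 : ℂ)}) hfin.sdiff
    (by
      rintro l ⟨hl, hl1⟩
      refine ⟨⟨fun j => inv_ne_zero (hl.1 j), fun i => ?_⟩, fun h => hl1 ?_⟩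
      · simp [hl.2 i]
      · funext j
        exact inv_eq_one.mp (congrFun h j))
    (by
      rintro l ⟨hl, hl1⟩ h
      exact hl1 (eq_one_of_self_inverse hodd hl (congrFun h)))
  omega
end
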